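/- Let k ∈ {0, 1, 2}, let π be a k-convex permutation of [n] with n ≥ 2, and let τ be a k-convex permutation of [m] with m ≥ 2. Suppose either (a) π(1) = τ(1), π(2) = τ(2), π(n−1) = τ(m−1), and π(n) = τ(m), or (b) π(1) = τ(m), π(2) = τ(m−1), π(n−1) = τ(2), and π(n) = τ(1). Then d_k(π, i) = d_k(τ, i) for every integer i ≥ 0. -/

import Mathlib

/-- A permutation `π` of `[n]` (modeled 0-indexed as `π : Equiv.Perm (Fin n)`;
the entry at position `i` has 1-indexed value `(π i : ℕ) + 1`) is `k`-convex if
`π(i-1) + π(i+1) - 2π(i) ≤ k` for all interior positions. -/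
def IsKConvex (k : ℕ) {n p : ℕ} (f : Fin n → Fin p) : Prop :=
  ∀ i j l : Fin n, (i : ℕ) + 1 = (j : ℕ) → (j : ℕ) + 1 = (l : ℕ) →
    ((f i : ℕ) : ℤ) + ((f l : ℕ) : ℤ) - 2 * ((f j : ℕ) : ℤ) ≤ (k : ℤ)

/-- The left descendant `L(π)`. -/
def Lf {n : ℕ} (f : Fin n → Fin n) : Fin (n + 1) → Fin (n + 1) :=
  Fin.cons 0 (fun i => (f i).succ)

/-- The right descendant `R(π)`. -/
def Rf {n : ℕ} (f : Fin n → Fin n) : Fin (n + 1) → Fin (n + 1) :=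
  Fin.snoc (fun i => (f i).succ) 0

/-- One step of descent: letter `false` is `L`, letter `true` is `R`. -/
def stepP {n : ℕ} (b : Bool) (f : Fin n → Fin n) : Fin (n + 1) → Fin (n + 1) :=
  if b then Rf f else Lf f

/-- `applyWord f i W` is `W(f) = W_i(W_{i-1}(⋯(W_1(f))⋯))` for the word
`W = W_1 W_2 … W_i` over the alphabet `{L, R}` (a word is `W : Fin i → Bool`). -/
def applyWord {n : ℕ} (f : Fin n → Fin n) :
    (i : ℕ) → (Fin i → Bool) → (Fin (n + i) → Fin (n + i))
  | 0, _ => f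
  | i + 1, W => stepP (W (Fin.last i)) (applyWord f i fun j => W j.castSucc)

/-- `d_k(π, i)`: the number of words `W` of length `i` over `{L, R}` such that
`W(π)` is `k`-convex. -/
noncomputable def dk (k : ℕ) {n : ℕ} (f : Fin n → Fin n) (i : ℕ) : ℕ :=
  Nat.card {W : Fin i → Bool // IsKConvex k (applyWord f i W)}

/-!
Prepending the minimal entry creates one new convexity condition, which involves only the first
two entries; appending it creates one that involves only the last two. The first two and last two
entries of a descendant are in turn determined by those of its parent, so they determine which
words preserve convexity. Reversing a permutation exchanges `L` and `R`, hence complements the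
words without changing their number; this reduces case (b) to case (a).
-/

section EndsDetermineDescent

variable {n m p k : ℕ}

theorem IsKConvex.comp_rev {f : Fin n → Fin p} (hf : IsKConvex k f) :
    IsKConvex k (f ∘ Fin.rev) := by
  intro i j l hij hjl
  have := hf l.rev j.rev i.rev (by grind) (by grind)
  simp only [Function.comp_apply]
  omega

theorem isKConvex_comp_rev_iff {f : Fin n → Fin p} :
    IsKConvex k (f ∘ Fin.rev) ↔ IsKConvex k f :=
  ⟨fun hf ↦ by simpa [Function.comp_assoc, Fin.rev_involutive.comp_self] using hf.comp_rev,
    IsKConvex.comp_rev⟩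

theorem Lf_comp_rev (f : Fin n → Fin n) : Lf f ∘ Fin.rev = Rf (f ∘ Fin.rev) :=
  Fin.cons_comp_rev _ _

theorem Rf_comp_rev (f : Fin n → Fin n) : Rf f ∘ Fin.rev = Lf (f ∘ Fin.rev) :=
  Fin.snoc_comp_rev _ _

theorem stepP_comp_rev (b : Bool) (f : Fin n → Fin n) :
    stepP b f ∘ Fin.rev = stepP (!b) (f ∘ Fin.rev) := by
  cases b
  · exact Lf_comp_rev f
  · exact Rf_comp_rev f

theorem applyWord_comp_rev (f : Fin n → Fin n) (i : ℕ) (W : Fin i → Bool) :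
    applyWord f i W ∘ Fin.rev = applyWord (f ∘ Fin.rev) i fun j ↦ !W j := by
  induction i with
  | zero => rfl
  | succ i ih => simp only [applyWord, stepP_comp_rev, ih]

theorem dk_comp_rev (k : ℕ) (f : Fin n → Fin n) (i : ℕ) : dk k (f ∘ Fin.rev) i = dk k f i :=
  Nat.card_congr <| .symm <| (Equiv.piCongrRight fun _ ↦ Equiv.boolNot).subtypeEquiv fun W ↦ by
    rw [← isKConvex_comp_rev_iff, applyWord_comp_rev]
    rfl

/-- The values of the first two entries. -/
def firstTwo (hn : 2 ≤ n) (f : Fin n → Fin p) : ℕ × ℕ :=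
  (f ⟨0, by omega⟩, f ⟨1, by omega⟩)

/-- The first two and the last two entries, the state on which the descent depends. Both pairs are
read from the outside in, so that reversal acts by `Prod.swap`. -/
def ends (hn : 2 ≤ n) (f : Fin n → Fin p) : (ℕ × ℕ) × (ℕ × ℕ) :=
  (firstTwo hn f, firstTwo hn (f ∘ Fin.rev))

theorem ends_comp_rev (hn : 2 ≤ n) (f : Fin n → Fin p) :
    ends hn (f ∘ Fin.rev) = (ends hn f).swap := by
  simp [ends, Function.comp_assoc, Fin.rev_involutive.comp_self]

theorem firstTwo_Lf (hn : 2 ≤ n) (f : Fin n → Fin n) :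
    firstTwo (Nat.le_add_right_of_le hn) (Lf f) = (0, (firstTwo hn f).1 + 1) :=
  rfl

theorem firstTwo_Rf (hn : 2 ≤ n) (f : Fin n → Fin n) :
    firstTwo (Nat.le_add_right_of_le hn) (Rf f) =
      ((firstTwo hn f).1 + 1, (firstTwo hn f).2 + 1) := by
  have hval (j : Fin n) : (Rf f j.castSucc : ℕ) = f j + 1 := by simp [Rf]
  exact Prod.ext (hval ⟨0, by omega⟩) (hval ⟨1, by omega⟩)

theorem ends_Lf_congr (hn : 2 ≤ n) (hm : 2 ≤ m) {f : Fin n → Fin n} {g : Fin m → Fin m}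
    (h : ends hn f = ends hm g) :
    ends (Nat.le_add_right_of_le hn) (Lf f) = ends (Nat.le_add_right_of_le hm) (Lf g) := by
  obtain ⟨hfirst, hlast⟩ := Prod.ext_iff.mp h
  simp only [ends] at hfirst hlast
  simp only [ends, Lf_comp_rev, firstTwo_Lf hn, firstTwo_Lf hm, firstTwo_Rf hn, firstTwo_Rf hm,
    hfirst, hlast]

theorem ends_Rf_congr (hn : 2 ≤ n) (hm : 2 ≤ m) {f : Fin n → Fin n} {g : Fin m → Fin m}
    (h : ends hn f = ends hm g) :
    ends (Nat.le_add_right_of_le hn) (Rf f) = ends (Nat.le_add_right_of_le hm) (Rf g) := by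
  rw [← Prod.swap_inj, ← ends_comp_rev, ← ends_comp_rev, Rf_comp_rev, Rf_comp_rev]
  exact ends_Lf_congr hn hm (by rw [ends_comp_rev, ends_comp_rev, h])

theorem isKConvex_Lf_iff (hn : 2 ≤ n) (f : Fin n → Fin n) :
    IsKConvex k (Lf f) ↔
      IsKConvex k f ∧ (firstTwo hn f).2 ≤ 2 * (firstTwo hn f).1 + k + 1 := by
  have hzero : (Lf f 0 : ℕ) = 0 := rfl
  have hsucc (j : Fin n) : (Lf f j.succ : ℕ) = f j + 1 := rfl
  constructor
  · refine fun h ↦ ⟨fun i j l hij hjl ↦ ?_, ?_⟩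
    · have := h i.succ j.succ l.succ (by simpa) (by simpa)
      simp only [hsucc] at this
      omega
    · have := h 0 (Fin.succ ⟨0, by omega⟩) (Fin.succ ⟨1, by omega⟩) rfl rfl
      simp only [hzero, hsucc] at this
      simp only [firstTwo]
      omega
  · rintro ⟨hf, hfirst⟩ i j l hij hjl
    obtain ⟨j, rfl⟩ := Fin.exists_succ_eq.mpr (show j ≠ 0 by grind)
    obtain ⟨l, rfl⟩ := Fin.exists_succ_eq.mpr (show l ≠ 0 by grind)
    cases i using Fin.cases with
    | zero =>
      obtain rfl : j = ⟨0, Nat.zero_lt_of_lt hn⟩ := by grind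
      obtain rfl : l = ⟨1, hn⟩ := by grind
      simp only [firstTwo] at hfirst
      simp only [hzero, hsucc]
      omega
    | succ i =>
      have := hf i j l (by simpa using hij) (by simpa using hjl)
      simp only [hsucc]
      omega

theorem isKConvex_Lf_congr (hn : 2 ≤ n) (hm : 2 ≤ m) {f : Fin n → Fin n} {g : Fin m → Fin m}
    (h : ends hn f = ends hm g) (hfg : IsKConvex k f ↔ IsKConvex k g) :
    IsKConvex k (Lf f) ↔ IsKConvex k (Lf g) := by
  have hfirst : firstTwo hn f = firstTwo hm g := congrArg Prod.fst h
  rw [isKConvex_Lf_iff hn, isKConvex_Lf_iff hm, hfg, hfirst]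

theorem isKConvex_Rf_congr (hn : 2 ≤ n) (hm : 2 ≤ m) {f : Fin n → Fin n} {g : Fin m → Fin m}
    (h : ends hn f = ends hm g) (hfg : IsKConvex k f ↔ IsKConvex k g) :
    IsKConvex k (Rf f) ↔ IsKConvex k (Rf g) := by
  rw [← isKConvex_comp_rev_iff, ← isKConvex_comp_rev_iff (f := Rf g), Rf_comp_rev, Rf_comp_rev]
  exact isKConvex_Lf_congr hn hm (by rw [ends_comp_rev, ends_comp_rev, h])
    (by simpa only [isKConvex_comp_rev_iff] using hfg)

theorem ends_applyWord_congr (hn : 2 ≤ n) (hm : 2 ≤ m) {f : Fin n → Fin n} {g : Fin m → Fin m}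
    (h : ends hn f = ends hm g) (i : ℕ) (W : Fin i → Bool) :
    ends (Nat.le_add_right_of_le hn) (applyWord f i W) =
      ends (Nat.le_add_right_of_le hm) (applyWord g i W) := by
  induction i with
  | zero => exact h
  | succ i ih =>
    simp only [applyWord]
    cases W (Fin.last i)
    · exact ends_Lf_congr _ _ (ih _)
    · exact ends_Rf_congr _ _ (ih _)

theorem isKConvex_applyWord_congr (hn : 2 ≤ n) (hm : 2 ≤ m) {f : Fin n → Fin n}
    {g : Fin m → Fin m} (h : ends hn f = ends hm g) (hfg : IsKConvex k f ↔ IsKConvex k g)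
    (i : ℕ) (W : Fin i → Bool) :
    IsKConvex k (applyWord f i W) ↔ IsKConvex k (applyWord g i W) := by
  induction i with
  | zero => exact hfg
  | succ i ih =>
    have hends := ends_applyWord_congr hn hm h i fun j ↦ W j.castSucc
    simp only [applyWord]
    cases W (Fin.last i)
    · exact isKConvex_Lf_congr _ _ hends (ih _)
    · exact isKConvex_Rf_congr _ _ hends (ih _)

theorem dk_congr (hn : 2 ≤ n) (hm : 2 ≤ m) {f : Fin n → Fin n} {g : Fin m → Fin m}
    (h : ends hn f = ends hm g) (hfg : IsKConvex k f ↔ IsKConvex k g) (i : ℕ) :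
    dk k f i = dk k g i :=
  Nat.card_congr <| Equiv.subtypeEquivRight <| isKConvex_applyWord_congr hn hm h hfg i

theorem identically_descending_of_matching_ends_general (hn : 2 ≤ n) (hm : 2 ≤ m)
    {f : Fin n → Fin n} {g : Fin m → Fin m} (hfg : IsKConvex k f ↔ IsKConvex k g)
    (hmatch : ends hn f = ends hm g ∨ ends hn f = (ends hm g).swap) (i : ℕ) :
    dk k f i = dk k g i := by
  rcases hmatch with h | h
  · exact dk_congr hn hm h hfg i
  · rw [← dk_comp_rev k g]
    exact dk_congr hn hm (by rw [h, ends_comp_rev]) (hfg.trans isKConvex_comp_rev_iff.symm) i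

end EndsDetermineDescent

/-- for `k ∈ {0,1,2}`, two `k`-convex permutations that agree on their
first two and last two entries (in order, or with the roles reversed) are
identically-descending: `d_k(π, i) = d_k(τ, i)` for all `i ≥ 0`. -/
theorem identically_descending_of_matching_ends (k : ℕ) (hk : k ≤ 2)
    (n m : ℕ) (hn : 2 ≤ n) (hm : 2 ≤ m)
    (π : Equiv.Perm (Fin n)) (τ : Equiv.Perm (Fin m))
    (hπ : IsKConvex k ⇑π) (hτ : IsKConvex k ⇑τ)
    (hmatch :
      ((π ⟨0, by omega⟩ : ℕ) = (τ ⟨0, by omega⟩ : ℕ) ∧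
       (π ⟨1, by omega⟩ : ℕ) = (τ ⟨1, by omega⟩ : ℕ) ∧
       (π ⟨n - 2, by omega⟩ : ℕ) = (τ ⟨m - 2, by omega⟩ : ℕ) ∧
       (π ⟨n - 1, by omega⟩ : ℕ) = (τ ⟨m - 1, by omega⟩ : ℕ)) ∨
      ((π ⟨0, by omega⟩ : ℕ) = (τ ⟨m - 1, by omega⟩ : ℕ) ∧
       (π ⟨1, by omega⟩ : ℕ) = (τ ⟨m - 2, by omega⟩ : ℕ) ∧
       (π ⟨n - 2, by omega⟩ : ℕ) = (τ ⟨1, by omega⟩ : ℕ) ∧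
       (π ⟨n - 1, by omega⟩ : ℕ) = (τ ⟨0, by omega⟩ : ℕ))) :
    ∀ i : ℕ, dk k ⇑π i = dk k ⇑τ i := by
  refine identically_descending_of_matching_ends_general hn hm (iff_of_true hπ hτ) ?_
  grind [ends, firstTwo, Fin.rev]
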